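/- arXiv:2503.16770 — 3 statements merged into one kernel-verified Lean document; each statement's English description precedes it below -/
import Mathlib

section
/- For every positive integer b and every integer i with 0 ≤ i ≤ ⌊g_b^{−1}(0)⌋, s_b(i) ≤ G_b(i) − p_b(i)/2. -/
open Finset

/-- `G_b(t) := −t/2 + √(bt − t²/4)`. -/
noncomputable def Gf (b : ℕ) (t : ℝ) : ℝ := -t / 2 + Real.sqrt (b * t - t ^ 2 / 4)

/-- `g_b(t) := G_b(t) − G_b(t−1)`. -/
noncomputable def gf (b : ℕ) (t : ℝ) : ℝ := Gf b t - Gf b (t - 1)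

/-- `Q(x,Δ,s,δ,i) := x² + (Δ + 2s + δ + i)x + (1+Δ)(s+i)`. -/
noncomputable def Qf (x Δ s δ i : ℝ) : ℝ := x ^ 2 + (Δ + 2 * s + δ + i) * x + (1 + Δ) * (s + i)

/-- The explicit formula for the inverse of (the restriction of) `g_b`. -/
noncomputable def ginv (b : ℕ) (x : ℝ) : ℝ :=
  2 * b * (1 + 1 / (4 * b) -
    Real.sqrt ((2 * x + 1) ^ 2 / ((2 * x + 1) ^ 2 + 1)) *
      Real.sqrt (1 - ((2 * x + 1) ^ 2 + 1) / (16 * b ^ 2)))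

open Classical in
/-- `τ_b(i) = 1` iff `i > 1` and `g_b(i) − ⌊g_b(i)⌋ ≥ 1/2 + (16b/(i−1) − 4)^{−1/2}`. -/
noncomputable def taub (b : ℕ) (i : ℕ) : ℕ :=
  if 1 < i ∧ (1 : ℝ) / 2 + 1 / Real.sqrt (16 * b / ((i : ℝ) - 1) - 4) ≤
      gf b i - ⌊gf b i⌋ then 1 else 0

/-- `p_b(i) := (Σ_{j=1}^{i} τ_b(j)) mod 2`. -/
noncomputable def pb (b : ℕ) (i : ℕ) : ℕ := (∑ j ∈ Finset.Icc 1 i, taub b j) % 2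

/-- `s_b(i) := Σ_{j=1}^{i} ⌊g_b(j)⌋ + Σ_{j=1}^{i} τ_b(j)·p_b(j−1)`. -/
noncomputable def sb (b : ℕ) (i : ℕ) : ℤ :=
  (∑ j ∈ Finset.Icc 1 i, ⌊gf b j⌋) + ∑ j ∈ Finset.Icc 1 i, (taub b j : ℤ) * (pb b (j - 1) : ℤ)

/-- `φ_{b,a} := 1/2 + (16b/g_b^{−1}(a + 0.5) − 4)^{−1/2}`. -/
noncomputable def phib (b : ℕ) (a : ℕ) : ℝ :=
  1 / 2 + 1 / Real.sqrt (16 * b / ginv b ((a : ℝ) + 0.5) - 4)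

/-- The constant `C_b`. -/
noncomputable def Cb (b : ℕ) : ℝ :=
  1 - (1 + (⌊gf b 1⌋ : ℝ)) / (2 * b) +
    ∑ a ∈ Finset.range (⌊gf b 1⌋.toNat),
      (2 - Real.sqrt ((2 * ((a : ℝ) + phib b a) + 1) ^ 2 / ((2 * ((a : ℝ) + phib b a) + 1) ^ 2 + 1))
         - Real.sqrt ((2 * (a : ℝ) + 3) ^ 2 / ((2 * (a : ℝ) + 3) ^ 2 + 1)))

/-!
Every second nonzero `τ_b(j)` occurs when the running parity is odd, so the correction sum
`∑ τ_b(j) p_b(j-1)` is half the number of nonzero `τ_b(j)`, rounded down. Hence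
`s_b(i) + p_b(i)/2 = ∑ (⌊g_b(j)⌋ + τ_b(j)/2)`. Since `τ_b(j) = 1` forces the fractional part of
`g_b(j)` to be at least `1/2`, each summand is at most `g_b(j)`, and `∑ g_b(j)` telescopes to
`G_b(i)`.
-/

theorem sum_mul_sum_mod_two (τ : ℕ → ℕ) (hτ : ∀ j, τ j ≤ 1) (n : ℕ) :
    ∑ j ∈ Icc 1 n, τ j * ((∑ k ∈ Icc 1 (j - 1), τ k) % 2) = (∑ j ∈ Icc 1 n, τ j) / 2 := by
  induction n with
  | zero => simp
  | succ n ih =>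
    rw [sum_Icc_succ_top (by lia), sum_Icc_succ_top (by lia), ih, Nat.add_sub_cancel]
    rcases Nat.le_one_iff_eq_zero_or_eq_one.mp (hτ (n + 1)) with h | h <;> rw [h] <;> lia

theorem taub_le_one (b i : ℕ) : taub b i ≤ 1 := by
  unfold taub
  split_ifs <;> simp

theorem taub_div_two_le_fract_gf (b i : ℕ) : (taub b i : ℝ) / 2 ≤ Int.fract (gf b i) := by
  unfold taub
  split_ifs with h
  · calc
      ((1 : ℕ) : ℝ) / 2 ≤ 1 / 2 + 1 / √(16 * b / ((i : ℝ) - 1) - 4) := by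
        rw [Nat.cast_one]
        exact le_add_of_nonneg_right (by positivity)
      _ ≤ Int.fract (gf b i) := h.2
  · simp

theorem sum_gf (b i : ℕ) : ∑ j ∈ Icc 1 i, gf b j = Gf b i := by
  induction i with
  | zero => simp [Gf]
  | succ i ih =>
    rw [sum_Icc_succ_top (by lia), ih, gf, Nat.cast_succ, add_sub_cancel_right, add_sub_cancel]

theorem sum_taub_mul_pb (b i : ℕ) :
    ∑ j ∈ Icc 1 i, taub b j * pb b (j - 1) = (∑ j ∈ Icc 1 i, taub b j) / 2 :=
  sum_mul_sum_mod_two (taub b) (taub_le_one b) i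

theorem sb_add_pb_div_two (b i : ℕ) :
    (sb b i : ℝ) + (pb b i : ℝ) / 2 = ∑ j ∈ Icc 1 i, ((⌊gf b j⌋ : ℝ) + (taub b j : ℝ) / 2) := by
  have two_mul_sum_add_pb :
      2 * ∑ j ∈ Icc 1 i, taub b j * pb b (j - 1) + pb b i = ∑ j ∈ Icc 1 i, taub b j := by
    rw [sum_taub_mul_pb, pb, Nat.div_add_mod]
  have two_mul_sum_add_pb_real :
      2 * ∑ j ∈ Icc 1 i, (taub b j : ℝ) * pb b (j - 1) + pb b i =
        ∑ j ∈ Icc 1 i, (taub b j : ℝ) := by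
    exact_mod_cast two_mul_sum_add_pb
  rw [sum_add_distrib, ← sum_div, ← two_mul_sum_add_pb_real, sb]
  push_cast
  ring

theorem ginv_le {b : ℕ} (hb : 0 < b) (x : ℝ) : ginv b x ≤ 2 * b + 1 / 2 := by
  have : (0 : ℝ) < b := Nat.cast_pos.mpr hb
  calc
    ginv b x ≤ 2 * b * (1 + 1 / (4 * b)) :=
      mul_le_mul_of_nonneg_left (sub_le_self _ (by positivity)) (by positivity)
    _ = 2 * b + 1 / 2 := by
      field_simp
      ring

theorem le_four_mul_of_le_floor_ginv {b i : ℕ} {x : ℝ} (hb : 0 < b)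
    (hi : (i : ℤ) ≤ ⌊ginv b x⌋) : i ≤ 4 * b := by
  have hi_real : (i : ℝ) ≤ 2 * b + 1 / 2 := (Int.le_floor.mp hi).trans (ginv_le hb x)
  have hb_real : (1 : ℝ) ≤ b := Nat.one_le_cast.mpr hb
  exact_mod_cast (by linarith : (i : ℝ) ≤ 4 * b)

/-- The bound `i ≤ 4 * b` is the domain of `G_b`: beyond it the square root in `Gf` is the junk
value `0`. -/
theorem sb_le_Gf_general (b i : ℕ) (_hi : i ≤ 4 * b) :
    (sb b i : ℝ) ≤ Gf b i - (pb b i : ℝ) / 2 := by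
  rw [le_sub_iff_add_le, sb_add_pb_div_two, ← sum_gf]
  refine sum_le_sum fun j _ ↦ ?_
  calc
    (⌊gf b j⌋ : ℝ) + (taub b j : ℝ) / 2 ≤ ⌊gf b j⌋ + Int.fract (gf b j) := by
      gcongr
      exact taub_div_two_le_fract_gf b j
    _ = gf b j := Int.floor_add_fract (gf b j)

/-- For `0 ≤ i ≤ ⌊g_b^{−1}(0)⌋`, `s_b(i) ≤ G_b(i) − p_b(i)/2`. -/
theorem sb_le_Gf (b : ℕ) (hb : 0 < b) (i : ℕ) (hi : (i : ℤ) ≤ ⌊ginv b 0⌋) :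
    (sb b i : ℝ) ≤ Gf b i - (pb b i : ℝ) / 2 :=
  sb_le_Gf_general b i (le_four_mul_of_le_floor_ginv hb hi)
end

section
/- For every positive integer b and every integer i with 1 ≤ i ≤ 4b, p_b(i−1)/2 + g_b(i) − ⌊g_b(i)⌋ − τ_b(i)·p_b(i−1) ≥ p_b(i)/2. -/
open Finset

/- For bits `p` and `t`, the carry identity `(p + t) % 2 = p + t - 2 * t * p` turns the inequality
into `τ_b(i) / 2 ≤ fract (g_b(i))`. This is clear if `τ_b(i) = 0`; otherwise it holds because the
threshold defining `τ_b` is at least `1 / 2`. -/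

theorem add_mod_two_add_two_mul_mul {p t : ℕ} (hp : p < 2) (ht : t < 2) :
    (p + t) % 2 + 2 * (t * p) = p + t := by
  interval_cases p <;> interval_cases t <;> rfl

theorem taub_lt_two (b i : ℕ) : taub b i < 2 := by
  unfold taub
  split_ifs <;> decide

theorem pb_lt_two (b i : ℕ) : pb b i < 2 := Nat.mod_lt _ two_pos

theorem pb_succ (b k : ℕ) : pb b (k + 1) = (pb b k + taub b (k + 1)) % 2 := by
  unfold pb
  rw [Finset.sum_Icc_succ_top (Nat.le_add_left 1 k), Nat.mod_add_mod]

theorem pb_succ_add_two_mul_mul (b k : ℕ) :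
    pb b (k + 1) + 2 * (taub b (k + 1) * pb b k) = pb b k + taub b (k + 1) := by
  rw [pb_succ]
  exact add_mod_two_add_two_mul_mul (pb_lt_two b k) (taub_lt_two b (k + 1))

/-- For `1 ≤ i ≤ 4b`,
`p_b(i−1)/2 + g_b(i) − ⌊g_b(i)⌋ − τ_b(i)·p_b(i−1) ≥ p_b(i)/2`. -/
theorem pb_inequality (b : ℕ) (hb : 0 < b) (i : ℕ) (hi1 : 1 ≤ i) (hi2 : i ≤ 4 * b) :
    (pb b (i - 1) : ℝ) / 2 + gf b i - (⌊gf b i⌋ : ℝ) - (taub b i : ℝ) * (pb b (i - 1) : ℝ)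
      ≥ (pb b i : ℝ) / 2 := by
  obtain ⟨k, rfl⟩ := Nat.exists_eq_add_of_le' hi1
  rw [Nat.add_sub_cancel]
  have carry : (pb b (k + 1) : ℝ) + 2 * (taub b (k + 1) * pb b k) = pb b k + taub b (k + 1) :=
    mod_cast pb_succ_add_two_mul_mul b k
  have threshold : (taub b (k + 1) : ℝ) / 2 ≤ gf b (k + 1 : ℕ) - ⌊gf b (k + 1 : ℕ)⌋ :=
    taub_div_two_le_fract_gf b (k + 1)
  linarith
end

section
/- For every positive integer b and every real x with 0 ≤ x ≤ g_b(1), ⌊g_b^{−1}(x)⌋ ≥ −1/2 + 2b·(1 − √((2x+1)²/((2x+1)² + 1))). -/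
open Finset

lemma gf_one (b : ℕ) : gf b 1 = -1 / 2 + √(b - 1 / 4) := by
  simp [gf, Gf]

lemma two_mul_gf_one_add_one_sq {b : ℕ} (hb : 0 < b) : (2 * gf b 1 + 1) ^ 2 = 4 * b - 1 := by
  have hb' : (1 : ℝ) ≤ b := by exact_mod_cast hb
  have hsq : √((b : ℝ) - 1 / 4) ^ 2 = b - 1 / 4 := Real.sq_sqrt (by linarith)
  rw [gf_one]
  linear_combination 4 * hsq

lemma sq_add_one_le_of_le_gf_one {b : ℕ} (hb : 0 < b) {x : ℝ} (hx0 : 0 ≤ x) (hx1 : x ≤ gf b 1) :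
    (2 * x + 1) ^ 2 + 1 ≤ 16 * (b : ℝ) ^ 2 := by
  have hb' : (1 : ℝ) ≤ b := by exact_mod_cast hb
  calc
    (2 * x + 1) ^ 2 + 1 ≤ (2 * gf b 1 + 1) ^ 2 + 1 := by gcongr
    _ = 4 * (b : ℝ) := by rw [two_mul_gf_one_add_one_sq hb]; ring
    _ ≤ 16 * (b : ℝ) ^ 2 := by nlinarith

lemma ginv_eq_half_add {b : ℕ} (hb : 0 < b) (x : ℝ) :
    ginv b x = 1 / 2 + 2 * b * (1 - √((2 * x + 1) ^ 2 / ((2 * x + 1) ^ 2 + 1)) *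
      √(1 - ((2 * x + 1) ^ 2 + 1) / (16 * b ^ 2))) := by
  have hb' : (b : ℝ) ≠ 0 := by exact_mod_cast hb.ne'
  have hhalf : 2 * (b : ℝ) * (1 / (4 * b)) = 1 / 2 := by field_simp; norm_num
  rw [ginv]
  linear_combination hhalf

lemma half_add_le_ginv {b : ℕ} (hb : 0 < b) (x : ℝ) :
    1 / 2 + 2 * b * (1 - √((2 * x + 1) ^ 2 / ((2 * x + 1) ^ 2 + 1))) ≤ ginv b x := by
  have hsqrt : √(1 - ((2 * x + 1) ^ 2 + 1) / (16 * (b : ℝ) ^ 2)) ≤ 1 :=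
    Real.sqrt_le_one.2 (sub_le_self 1 (by positivity))
  rw [ginv_eq_half_add hb]
  gcongr
  exact mul_le_of_le_one_right (Real.sqrt_nonneg _) hsqrt

/-- The range of `x` is where the second radicand in `ginv b x` is nonnegative. -/
theorem floor_ginv_ge_general (b : ℕ) (x : ℝ) (hx : (2 * x + 1) ^ 2 + 1 ≤ 16 * (b : ℝ) ^ 2) :
    (⌊ginv b x⌋ : ℝ) ≥
      -1 / 2 + 2 * b * (1 - √((2 * x + 1) ^ 2 / ((2 * x + 1) ^ 2 + 1))) := by
  have hb : 0 < b := by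
    rw [Nat.pos_iff_ne_zero]
    rintro rfl
    have hneg : (2 * x + 1) ^ 2 + 1 ≤ 0 := by simpa using hx
    exact hneg.not_gt (by positivity)
  linarith [half_add_le_ginv hb x, Int.sub_one_lt_floor (ginv b x)]

/-- For `0 ≤ x ≤ g_b(1)`,
`⌊g_b^{−1}(x)⌋ ≥ −1/2 + 2b(1 − √((2x+1)²/((2x+1)²+1)))`. -/
theorem floor_ginv_ge (b : ℕ) (hb : 0 < b) (x : ℝ) (hx0 : 0 ≤ x) (hx1 : x ≤ gf b 1) :
    (⌊ginv b x⌋ : ℝ) ≥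
      -1 / 2 + 2 * b * (1 - Real.sqrt ((2 * x + 1) ^ 2 / ((2 * x + 1) ^ 2 + 1))) :=
  floor_ginv_ge_general b x (sq_add_one_le_of_le_gf_one hb hx0 hx1)
end
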